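/- arXiv:1502.02877 — 8 statements merged into one kernel-verified Lean document; each statement's English description precedes it below -/
import Mathlib

section
/- Let α, J, Y be arbitrary real numbers and define f(β) = (cos β)·J − (sin β)·Y for β ∈ ℝ. Then f(α)² − f(α−1)·f(α+1) = sin²(1)·(J² + Y²). In particular, this 'Turánian with respect to the parameter α' is strictly positive whenever (J,Y) ≠ (0,0), and is independent of α. -/
/-- The Turánian of the general Bessel function with respect to the parameter α:
for `f β = (cos β)·J − (sin β)·Y`, one has
`f α ² − f (α−1)·f (α+1) = sin²(1)·(J² + Y²)`, which is strictly positive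
whenever `(J, Y) ≠ (0, 0)`, and is independent of `α`. -/
theorem turanian_in_alpha (α J Y : ℝ)
    (f : ℝ → ℝ) (hf : ∀ β, f β = Real.cos β * J - Real.sin β * Y) :
    f α ^ 2 - f (α - 1) * f (α + 1) = Real.sin 1 ^ 2 * (J ^ 2 + Y ^ 2) ∧
    ((J, Y) ≠ (0, 0) → 0 < f α ^ 2 - f (α - 1) * f (α + 1)) := by
  have key : f α ^ 2 - f (α - 1) * f (α + 1) = Real.sin 1 ^ 2 * (J ^ 2 + Y ^ 2) := by
    rw [hf, hf, hf, Real.cos_sub, Real.cos_add, Real.sin_sub, Real.sin_add]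
    linear_combination Real.sin 1 ^ 2 * (J ^ 2 + Y ^ 2) * Real.sin_sq_add_cos_sq α
      - (Real.cos α * J - Real.sin α * Y) ^ 2 * Real.sin_sq_add_cos_sq 1
  refine ⟨key, fun h => ?_⟩
  rw [key]
  have h1 : 0 < Real.sin 1 :=
    Real.sin_pos_of_pos_of_lt_pi one_pos (by linarith [Real.pi_gt_three])
  have h2 : 0 < J ^ 2 + Y ^ 2 := by
    by_cases hJ : J = 0
    · have hY : Y ≠ 0 := fun hY => h (by rw [hJ, hY])
      positivity
    · positivity
  positivity
end

section
/- Let ν > 0 and let a, c, b : ℝ → ℝ be differentiable on (0,∞) satisfying, for all x > 0: c'(x) = a(x) − (ν/x)c(x), c'(x) = −b(x) + (ν/x)c(x), a'(x) = −c(x) + ((ν−1)/x)a(x), and b'(x) = c(x) − ((ν+1)/x)b(x). If x₀ > 0 and a(x₀) = 0, then the Turánian Δ(x) = c(x)² − a(x)b(x) is twice differentiable at x₀ and Δ''(x₀) = −(4ν/x₀²)·c(x₀)² ≤ 0; in particular Δ''(x₀) < 0 if c(x₀) ≠ 0, so every zero of a at which c does not vanish is a strict relative maximum of Δ. -/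
/-- If `a, c, b` satisfy the cylinder-function recurrence system on `(0,∞)`,
`ν > 0`, `x₀ > 0` and `a(x₀) = 0`, then the Turánian `Δ(x) = c(x)² − a(x)b(x)`
is twice differentiable at `x₀` with `Δ''(x₀) = −(4ν/x₀²)·c(x₀)² ≤ 0`;
if moreover `c(x₀) ≠ 0` then `Δ''(x₀) < 0` and `x₀` is a strict relative
maximum of `Δ`. -/
theorem turanian_max_at_zero_of_a (ν : ℝ) (hν : 0 < ν) (a c b : ℝ → ℝ)
    (hc : ∀ x, 0 < x → HasDerivAt c (a x - (ν / x) * c x) x)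
    (hc' : ∀ x, 0 < x → HasDerivAt c (-b x + (ν / x) * c x) x)
    (ha : ∀ x, 0 < x → HasDerivAt a (-c x + ((ν - 1) / x) * a x) x)
    (hb : ∀ x, 0 < x → HasDerivAt b (c x - ((ν + 1) / x) * b x) x)
    (x₀ : ℝ) (hx₀ : 0 < x₀) (ha₀ : a x₀ = 0) :
    DifferentiableAt ℝ (deriv (fun x => c x ^ 2 - a x * b x)) x₀ ∧
    deriv (deriv (fun x => c x ^ 2 - a x * b x)) x₀ = -(4 * ν / x₀ ^ 2) * c x₀ ^ 2 ∧
    deriv (deriv (fun x => c x ^ 2 - a x * b x)) x₀ ≤ 0 ∧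
    (c x₀ ≠ 0 →
      deriv (deriv (fun x => c x ^ 2 - a x * b x)) x₀ < 0 ∧
      ∃ ε > 0, ∀ x ∈ Set.Ioo (x₀ - ε) (x₀ + ε), x ≠ x₀ →
        c x ^ 2 - a x * b x < c x₀ ^ 2 - a x₀ * b x₀) := by
  have hab : ∀ x, 0 < x → b x = 2 * (ν / x) * c x - a x := by
    intro x hx
    have := (hc x hx).unique (hc' x hx)
    linarith
  have hD : ∀ x, 0 < x → HasDerivAt (fun x => c x ^ 2 - a x * b x) (2 * (a x * b x) / x) x := by
    intro x hx
    have h := ((hc x hx).pow 2).sub ((ha x hx).mul (hb x hx))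
    refine h.congr_deriv ?_
    have hx' := hx.ne'
    rw [hab x hx]
    simp only [Nat.cast_ofNat]
    field_simp
    ring
  have hDe : deriv (fun x => c x ^ 2 - a x * b x) =ᶠ[nhds x₀] fun x => 2 * (a x * b x) / x := by
    filter_upwards [lt_mem_nhds hx₀] with x hx using (hD x hx).deriv
  have hG : HasDerivAt (fun x => 2 * (a x * b x) / x) (-(4 * ν / x₀ ^ 2) * c x₀ ^ 2) x₀ := by
    have h := (((ha x₀ hx₀).mul (hb x₀ hx₀)).const_mul 2).div (hasDerivAt_id x₀) hx₀.ne'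
    refine h.congr_deriv ?_
    have hx' := hx₀.ne'
    simp only [Pi.mul_apply, id, hab x₀ hx₀, ha₀]
    field_simp
    ring
  have hDD := hG.congr_of_eventuallyEq hDe
  have hle : -(4 * ν / x₀ ^ 2) * c x₀ ^ 2 ≤ 0 := by
    have : 0 ≤ 4 * ν / x₀ ^ 2 * c x₀ ^ 2 := by positivity
    linarith
  refine ⟨hDD.differentiableAt, hDD.deriv, hDD.deriv.trans_le hle, fun hc0 => ?_⟩
  have hlt : -(4 * ν / x₀ ^ 2) * c x₀ ^ 2 < 0 := by
    have : 0 < 4 * ν / x₀ ^ 2 * c x₀ ^ 2 := by positivity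
    linarith
  refine ⟨hDD.deriv.trans_lt hlt, ?_⟩
  have hs := (hasDerivAt_iff_tendsto_slope.1 hG).eventually (gt_mem_nhds hlt)
  rw [eventually_nhdsWithin_iff] at hs
  obtain ⟨ε, hε, H⟩ := Metric.eventually_nhds_iff.1 (hs.and (lt_mem_nhds hx₀))
  have H1 : ∀ y, |y - x₀| < ε → 0 < y := fun y hy => (H (by rwa [Real.dist_eq])).2
  have H2 : ∀ y, |y - x₀| < ε → y ≠ x₀ → (2 * (a y * b y) / y) / (y - x₀) < 0 := by
    intro y hy hne
    have := (H (y := y) (by rwa [Real.dist_eq])).1 hne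
    simpa [slope_def_field, ha₀] using this
  refine ⟨ε, hε, fun x hx hne => ?_⟩
  rcases lt_or_gt_of_ne hne with hl | hl
  · have hpos : ∀ y ∈ Set.Icc x x₀, |y - x₀| < ε := fun y hy => by
      rw [abs_lt]; constructor <;> linarith [hx.1, hy.1, hy.2]
    obtain ⟨y, hy, he⟩ := exists_hasDerivAt_eq_slope (fun x => c x ^ 2 - a x * b x)
      (fun x => 2 * (a x * b x) / x) hl
      (fun y hy => (hD y (H1 y (hpos y hy))).continuousAt.continuousWithinAt)
      (fun y hy => hD y (H1 y (hpos y ⟨hy.1.le, hy.2.le⟩)))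
    have h2 := H2 y (hpos y ⟨hy.1.le, hy.2.le⟩) hy.2.ne
    rw [div_neg_iff] at h2
    have hp : 0 < 2 * (a y * b y) / y := by
      rcases h2 with h | h
      · exact h.1
      · linarith [h.2, hy.2]
    rw [he, div_pos_iff_of_pos_right (by linarith)] at hp
    linarith
  · have hpos : ∀ y ∈ Set.Icc x₀ x, |y - x₀| < ε := fun y hy => by
      rw [abs_lt]; constructor <;> linarith [hx.2, hy.1, hy.2]
    obtain ⟨y, hy, he⟩ := exists_hasDerivAt_eq_slope (fun x => c x ^ 2 - a x * b x)
      (fun x => 2 * (a x * b x) / x) hl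
      (fun y hy => (hD y (H1 y (hpos y hy))).continuousAt.continuousWithinAt)
      (fun y hy => hD y (H1 y (hpos y ⟨hy.1.le, hy.2.le⟩)))
    have h2 := H2 y (hpos y ⟨hy.1.le, hy.2.le⟩) hy.1.ne'
    rw [div_neg_iff] at h2
    have hp : 2 * (a y * b y) / y < 0 := by
      rcases h2 with h | h
      · linarith [h.2, hy.1]
      · exact h.1
    rw [he, div_neg_iff] at hp
    rcases hp with h | h <;> linarith [h.1, h.2]
end

section
/- Let ν > 0 and let a, c, b : ℝ → ℝ be differentiable on (0,∞) satisfying, for all x > 0: c'(x) = a(x) − (ν/x)c(x), c'(x) = −b(x) + (ν/x)c(x), a'(x) = −c(x) + ((ν−1)/x)a(x), and b'(x) = c(x) − ((ν+1)/x)b(x). If x₀ > 0 and b(x₀) = 0, then the Turánian Δ(x) = c(x)² − a(x)b(x) is twice differentiable at x₀ and Δ''(x₀) = (4ν/x₀²)·c(x₀)² ≥ 0; in particular Δ''(x₀) > 0 if c(x₀) ≠ 0, so every zero of b at which c does not vanish is a strict relative minimum of Δ. -/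
/-- If `a, c, b` satisfy the cylinder-function recurrence system on `(0,∞)`,
`ν > 0`, `x₀ > 0` and `b(x₀) = 0`, then the Turánian `Δ(x) = c(x)² − a(x)b(x)`
is twice differentiable at `x₀` with `Δ''(x₀) = (4ν/x₀²)·c(x₀)² ≥ 0`;
if moreover `c(x₀) ≠ 0` then `Δ''(x₀) > 0` and `x₀` is a strict relative
minimum of `Δ`. -/
theorem turanian_min_at_zero_of_b (ν : ℝ) (hν : 0 < ν) (a c b : ℝ → ℝ)
    (hc : ∀ x, 0 < x → HasDerivAt c (a x - (ν / x) * c x) x)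
    (hc' : ∀ x, 0 < x → HasDerivAt c (-b x + (ν / x) * c x) x)
    (ha : ∀ x, 0 < x → HasDerivAt a (-c x + ((ν - 1) / x) * a x) x)
    (hb : ∀ x, 0 < x → HasDerivAt b (c x - ((ν + 1) / x) * b x) x)
    (x₀ : ℝ) (hx₀ : 0 < x₀) (hb₀ : b x₀ = 0) :
    DifferentiableAt ℝ (deriv (fun x => c x ^ 2 - a x * b x)) x₀ ∧
    deriv (deriv (fun x => c x ^ 2 - a x * b x)) x₀ = (4 * ν / x₀ ^ 2) * c x₀ ^ 2 ∧
    0 ≤ deriv (deriv (fun x => c x ^ 2 - a x * b x)) x₀ ∧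
    (c x₀ ≠ 0 →
      0 < deriv (deriv (fun x => c x ^ 2 - a x * b x)) x₀ ∧
      ∃ ε > 0, ∀ x ∈ Set.Ioo (x₀ - ε) (x₀ + ε), x ≠ x₀ →
        c x₀ ^ 2 - a x₀ * b x₀ < c x ^ 2 - a x * b x) := by
  have hD : ∀ x, 0 < x → HasDerivAt (fun x => c x ^ 2 - a x * b x) (2 * (a x * b x) / x) x := by
    intro x hx
    have hu := (hc x hx).unique (hc' x hx)
    have h := ((hc x hx).pow 2).sub ((ha x hx).mul (hb x hx))
    refine h.congr_deriv ?_
    have h2 : a x = 2 * (ν / x) * c x - b x := by linarith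
    simp only [Nat.cast_ofNat]
    rw [h2]
    field_simp
    ring
  have ha0 : a x₀ = 2 * ν * c x₀ / x₀ := by
    have hu := (hc x₀ hx₀).unique (hc' x₀ hx₀)
    rw [hb₀] at hu
    have : a x₀ = 2 * (ν / x₀) * c x₀ := by linarith
    rw [this]; ring
  have hev : deriv (fun x => c x ^ 2 - a x * b x) =ᶠ[nhds x₀] fun x => 2 * (a x * b x) / x := by
    filter_upwards [lt_mem_nhds hx₀] with x hx
    exact (hD x hx).deriv
  have hDD : HasDerivAt (deriv (fun x => c x ^ 2 - a x * b x))
      ((4 * ν / x₀ ^ 2) * c x₀ ^ 2) x₀ := by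
    refine HasDerivAt.congr_of_eventuallyEq ?_ hev
    have h := ((((ha x₀ hx₀).mul (hb x₀ hx₀)).const_mul 2).div (hasDerivAt_id x₀) hx₀.ne')
    refine h.congr_deriv ?_
    simp only [Pi.mul_apply, id, hb₀, ha0]
    field_simp
    ring
  refine ⟨hDD.differentiableAt, hDD.deriv, ?_, ?_⟩
  · rw [hDD.deriv]; positivity
  intro hc0
  have hpos : 0 < deriv (deriv (fun x => c x ^ 2 - a x * b x)) x₀ := by
    rw [hDD.deriv]; positivity
  refine ⟨hpos, ?_⟩
  have hd0 : deriv (fun x => c x ^ 2 - a x * b x) x₀ = 0 := by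
    rw [(hD x₀ hx₀).deriv, hb₀]; simp
  have hs := eventually_nhdsWithin_sign_eq_of_deriv_pos hpos hd0
  rw [Metric.eventually_nhds_iff] at hs
  obtain ⟨δ, hδ, hs⟩ := hs
  refine ⟨min δ x₀, lt_min hδ hx₀, ?_⟩
  rintro x ⟨h1, h2⟩ hne
  have m1 := min_le_left δ x₀
  have m2 := min_le_right δ x₀
  have hsgn : ∀ y, x₀ - min δ x₀ < y → y < x₀ + min δ x₀ →
      SignType.sign (deriv (fun x => c x ^ 2 - a x * b x) y) = SignType.sign (y - x₀) := by
    intro y hy1 hy2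
    apply hs
    rw [Real.dist_eq, abs_lt]
    constructor <;> linarith
  rcases lt_or_gt_of_ne hne with hlt | hgt
  · have hanti : StrictAntiOn (fun x => c x ^ 2 - a x * b x) (Set.Icc x x₀) := by
      apply strictAntiOn_of_deriv_neg (convex_Icc _ _)
      · intro y hy
        exact (hD y (by linarith [hy.1])).continuousAt.continuousWithinAt
      · intro y hy
        rw [interior_Icc] at hy
        have := hsgn y (by linarith [hy.1]) (by linarith [hy.2])
        rw [sign_neg (sub_neg.2 hy.2)] at this
        exact sign_eq_neg_one_iff.1 this
    exact hanti (Set.left_mem_Icc.2 hlt.le) (Set.right_mem_Icc.2 hlt.le) hlt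
  · have hmono : StrictMonoOn (fun x => c x ^ 2 - a x * b x) (Set.Icc x₀ x) := by
      apply strictMonoOn_of_deriv_pos (convex_Icc _ _)
      · intro y hy
        exact (hD y (by linarith [hy.1])).continuousAt.continuousWithinAt
      · intro y hy
        rw [interior_Icc] at hy
        have := hsgn y (by linarith [hy.1]) (by linarith [hy.2])
        rw [sign_pos (sub_pos.2 hy.1)] at this
        exact sign_eq_one_iff.1 this
    exact hmono (Set.left_mem_Icc.2 hgt.le) (Set.right_mem_Icc.2 hgt.le) hgt
end

section
/- Let ν > 0 and let Φ₋, Φ, Φ₊ : ℝ → ℝ be differentiable on (0,∞) satisfying, for all x > 0: Φ₋'(x) = −xΦ(x)/(2ν), Φ'(x) = −xΦ₊(x)/(2(ν+1)), Φ'(x) = (2ν/x)(Φ₋(x) − Φ(x)), and Φ₊'(x) = (2(ν+1)/x)(Φ(x) − Φ₊(x)). Define Θ(x) = Φ(x)² − Φ₋(x)Φ₊(x). Then for all x > 0, the function x ↦ x^(2ν+2)Θ(x) is differentiable with derivative (d/dx)(x^(2ν+2)Θ(x)) = −(2/ν)·x^(2ν+2)·Φ(x)·Φ'(x). -/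
/-- If the normalized cylinder functions `Φ₋, Φ, Φ₊` satisfy the derivative
relations, then for `Θ(x) = Φ(x)² − Φ₋(x)Φ₊(x)` one has
`(d/dx)(x^(2ν+2)Θ(x)) = −(2/ν)·x^(2ν+2)·Φ(x)·Φ'(x)` on `(0,∞)`. -/
theorem weighted_turanian_deriv (ν : ℝ) (hν : 0 < ν) (Φm Φ Φp : ℝ → ℝ)
    (hΦm : ∀ x, 0 < x → HasDerivAt Φm (-(x * Φ x) / (2 * ν)) x)
    (hΦ : ∀ x, 0 < x → HasDerivAt Φ (-(x * Φp x) / (2 * (ν + 1))) x)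
    (hΦ' : ∀ x, 0 < x → deriv Φ x = (2 * ν / x) * (Φm x - Φ x))
    (hΦp : ∀ x, 0 < x → HasDerivAt Φp ((2 * (ν + 1) / x) * (Φ x - Φp x)) x) :
    ∀ x, 0 < x →
      HasDerivAt (fun x => x ^ (2 * ν + 2) * (Φ x ^ 2 - Φm x * Φp x))
        (-(2 / ν) * x ^ (2 * ν + 2) * Φ x * deriv Φ x) x := by
  intro x hx
  have hd := (hΦ x hx).deriv
  have h1 := hΦ' x hx
  have hn : ν ≠ 0 := hν.ne'
  have hn1 : ν + 1 ≠ 0 := by positivity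
  have hx0 : x ≠ 0 := hx.ne'
  have hD : HasDerivAt Φ (deriv Φ x) x := (hΦ x hx).differentiableAt.hasDerivAt
  have hpow := Real.hasDerivAt_rpow_const (x := x) (p := 2 * ν + 2) (Or.inl hx0)
  have key := hpow.mul ((hD.pow 2).sub ((hΦm x hx).mul (hΦp x hx)))
  refine key.congr_deriv ?_
  generalize deriv Φ x = D at *
  have e1 : Φp x = -(2 * (ν + 1)) * D / x := by
    rw [hd]; field_simp
  have e2 : Φm x = Φ x + x * D / (2 * ν) := by
    rw [h1]; field_simp; ring
  rw [Real.rpow_sub_one hx0]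
  simp only [Pi.sub_apply, Pi.mul_apply, Pi.pow_apply]
  rw [e1, e2]
  generalize x ^ (2 * ν + 2) = P
  field_simp
  push_cast
  ring
end

section
/- Let ν > 0 and let Φ₋, Φ, Φ₊ : ℝ → ℝ with Φ twice differentiable and Φ₋, Φ₊ differentiable on (0,∞), satisfying for all x > 0: Φ₋'(x) = −xΦ(x)/(2ν), Φ'(x) = −xΦ₊(x)/(2(ν+1)), Φ'(x) = (2ν/x)(Φ₋(x) − Φ(x)), and Φ₊'(x) = (2(ν+1)/x)(Φ(x) − Φ₊(x)). Define Θ(x) = Φ(x)² − Φ₋(x)Φ₊(x). If x₀ > 0 and Φ(x₀) = 0, then the second derivative of x ↦ x^(2ν+2)Θ(x) at x₀ equals −(2/ν)·x₀^(2ν+2)·Φ'(x₀)², which is strictly negative when Φ'(x₀) ≠ 0. -/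
/-- If the normalized cylinder functions `Φ₋, Φ, Φ₊` satisfy the derivative
relations, `Φ` is twice differentiable on `(0,∞)`, `x₀ > 0` and `Φ(x₀) = 0`,
then the second derivative of `x ↦ x^(2ν+2)Θ(x)` at `x₀`, where
`Θ(x) = Φ(x)² − Φ₋(x)Φ₊(x)`, equals `−(2/ν)·x₀^(2ν+2)·Φ'(x₀)²`, which is
strictly negative when `Φ'(x₀) ≠ 0`. -/
theorem weighted_turanian_max (ν : ℝ) (hν : 0 < ν) (Φm Φ Φp : ℝ → ℝ)
    (hΦ2 : ∀ x, 0 < x → DifferentiableAt ℝ (deriv Φ) x)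
    (hΦm : ∀ x, 0 < x → HasDerivAt Φm (-(x * Φ x) / (2 * ν)) x)
    (hΦ : ∀ x, 0 < x → HasDerivAt Φ (-(x * Φp x) / (2 * (ν + 1))) x)
    (hΦ' : ∀ x, 0 < x → deriv Φ x = (2 * ν / x) * (Φm x - Φ x))
    (hΦp : ∀ x, 0 < x → HasDerivAt Φp ((2 * (ν + 1) / x) * (Φ x - Φp x)) x)
    (x₀ : ℝ) (hx₀ : 0 < x₀) (hΦ0 : Φ x₀ = 0) :
    deriv (deriv (fun x => x ^ (2 * ν + 2) * (Φ x ^ 2 - Φm x * Φp x))) x₀ =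
      -(2 / ν) * x₀ ^ (2 * ν + 2) * (deriv Φ x₀) ^ 2 ∧
    (deriv Φ x₀ ≠ 0 →
      deriv (deriv (fun x => x ^ (2 * ν + 2) * (Φ x ^ 2 - Φm x * Φp x))) x₀ < 0) := by
  have key : ∀ x, 0 < x → deriv (fun x => x ^ (2 * ν + 2) * (Φ x ^ 2 - Φm x * Φp x)) x =
      -(2 / ν) * x ^ (2 * ν + 2) * (Φ x * deriv Φ x) := by
    intro x hx
    have hp : HasDerivAt (fun x : ℝ => x ^ (2 * ν + 2)) ((2 * ν + 2) * x ^ (2 * ν + 2 - 1)) x :=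
      Real.hasDerivAt_rpow_const (Or.inl hx.ne')
    have h := hp.mul (((hΦ x hx).pow 2).sub ((hΦm x hx).mul (hΦp x hx)))
    have e1 := hΦ' x hx
    have e2 := (hΦ x hx).deriv
    have e3 : Φm x = Φ x + x / (2 * ν) * deriv Φ x := by
      rw [e1]; field_simp; ring
    have e4 : Φp x = -(2 * (ν + 1) / x) * deriv Φ x := by
      rw [e2]; field_simp
    refine Eq.trans h.deriv ?_
    rw [Real.rpow_sub_one hx.ne']
    simp only [Pi.pow_apply, Pi.sub_apply, Pi.mul_apply]
    rw [e3, e4]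
    generalize deriv Φ x = d
    generalize x ^ (2 * ν + 2) = P
    have : ν + 1 ≠ 0 := by positivity
    field_simp
    ring
  have main : deriv (deriv (fun x => x ^ (2 * ν + 2) * (Φ x ^ 2 - Φm x * Φp x))) x₀ =
      -(2 / ν) * x₀ ^ (2 * ν + 2) * (deriv Φ x₀) ^ 2 := by
    have ev : deriv (fun x => x ^ (2 * ν + 2) * (Φ x ^ 2 - Φm x * Φp x)) =ᶠ[nhds x₀]
        fun x => -(2 / ν) * x ^ (2 * ν + 2) * (Φ x * deriv Φ x) := by
      filter_upwards [lt_mem_nhds hx₀] with x hx using key x hx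
    rw [ev.deriv_eq]
    have hp : HasDerivAt (fun x : ℝ => x ^ (2 * ν + 2)) ((2 * ν + 2) * x₀ ^ (2 * ν + 2 - 1)) x₀ :=
      Real.hasDerivAt_rpow_const (Or.inl hx₀.ne')
    have h := (hp.const_mul (-(2 / ν))).mul
      ((hΦ x₀ hx₀).differentiableAt.hasDerivAt.mul (hΦ2 x₀ hx₀).hasDerivAt)
    refine Eq.trans h.deriv ?_
    simp only [Pi.mul_apply, hΦ0]
    ring
  refine ⟨main, fun hd => ?_⟩
  rw [main]
  have h1 : 0 < 2 / ν * x₀ ^ (2 * ν + 2) * (deriv Φ x₀) ^ 2 := by positivity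
  linarith
end

section
/- Let ν > 0 and let Φ₋, Φ, Φ₊ : ℝ → ℝ with Φ twice differentiable and Φ₋, Φ₊ differentiable on (0,∞), satisfying for all x > 0: Φ₋'(x) = −xΦ(x)/(2ν), Φ'(x) = −xΦ₊(x)/(2(ν+1)), Φ'(x) = (2ν/x)(Φ₋(x) − Φ(x)), Φ₊'(x) = (2(ν+1)/x)(Φ(x) − Φ₊(x)), and the differential equation x²Φ''(x) + (2ν+1)xΦ'(x) + x²Φ(x) = 0. Define Θ(x) = Φ(x)² − Φ₋(x)Φ₊(x). If x₀ > 0 and Φ'(x₀) = 0, then the second derivative of x ↦ x^(2ν+2)Θ(x) at x₀ equals (2/ν)·x₀^(2ν+2)·Φ(x₀)², which is strictly positive when Φ(x₀) ≠ 0. -/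
/-- If the normalized cylinder functions `Φ₋, Φ, Φ₊` satisfy the derivative
relations and `Φ` solves `x²Φ'' + (2ν+1)xΦ' + x²Φ = 0` on `(0,∞)`, and if
`x₀ > 0` with `Φ'(x₀) = 0`, then the second derivative of
`x ↦ x^(2ν+2)Θ(x)` at `x₀`, where `Θ(x) = Φ(x)² − Φ₋(x)Φ₊(x)`, equals
`(2/ν)·x₀^(2ν+2)·Φ(x₀)²`, which is strictly positive when `Φ(x₀) ≠ 0`. -/
theorem weighted_turanian_min (ν : ℝ) (hν : 0 < ν) (Φm Φ Φp : ℝ → ℝ)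
    (hΦ2 : ∀ x, 0 < x → DifferentiableAt ℝ (deriv Φ) x)
    (hΦm : ∀ x, 0 < x → HasDerivAt Φm (-(x * Φ x) / (2 * ν)) x)
    (hΦ : ∀ x, 0 < x → HasDerivAt Φ (-(x * Φp x) / (2 * (ν + 1))) x)
    (hΦ' : ∀ x, 0 < x → deriv Φ x = (2 * ν / x) * (Φm x - Φ x))
    (hΦp : ∀ x, 0 < x → HasDerivAt Φp ((2 * (ν + 1) / x) * (Φ x - Φp x)) x)
    (hode : ∀ x, 0 < x →
      x ^ 2 * deriv (deriv Φ) x + (2 * ν + 1) * x * deriv Φ x + x ^ 2 * Φ x = 0)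
    (x₀ : ℝ) (hx₀ : 0 < x₀) (hΦ0 : deriv Φ x₀ = 0) :
    deriv (deriv (fun x => x ^ (2 * ν + 2) * (Φ x ^ 2 - Φm x * Φp x))) x₀ =
      (2 / ν) * x₀ ^ (2 * ν + 2) * Φ x₀ ^ 2 ∧
    (Φ x₀ ≠ 0 →
      0 < deriv (deriv (fun x => x ^ (2 * ν + 2) * (Φ x ^ 2 - Φm x * Φp x))) x₀) := by
  have hν1 : (ν + 1) ≠ 0 := by positivity
  have hν0 : ν ≠ 0 := hν.ne'
  have key : ∀ x, 0 < x → x ^ 2 * Φp x = 4 * ν * (ν + 1) * (Φ x - Φm x) := by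
    intro x hx
    have h1 := hΦ' x hx
    rw [(hΦ x hx).deriv] at h1
    have hx' := hx.ne'
    field_simp at h1
    linear_combination (-1) * h1
  have hF : ∀ x, 0 < x →
      HasDerivAt (fun x => x ^ (2 * ν + 2) * (Φ x ^ 2 - Φm x * Φp x))
        (x ^ (2 * ν + 2) * (x * Φ x * Φp x / (ν * (ν + 1)))) x := by
    intro x hx
    have hx' := hx.ne'
    have h := (Real.hasDerivAt_rpow_const (x := x) (p := 2 * ν + 2) (Or.inl hx')).mul
      (((hΦ x hx).pow 2).sub ((hΦm x hx).mul (hΦp x hx)))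
    refine h.congr_deriv ?_
    have hk := key x hx
    have ha : Φm x = Φ x - x ^ 2 * Φp x / (4 * ν * (ν + 1)) := by
      rw [hk]; field_simp; ring
    rw [Real.rpow_sub_one hx']
    simp only [Pi.sub_apply, Pi.mul_apply, Pi.pow_apply]
    rw [ha]
    field_simp
    push_cast
    ring
  have hp0 : Φp x₀ = 0 := by
    have h1 := (hΦ x₀ hx₀).deriv
    rw [hΦ0] at h1
    have hx' := hx₀.ne'
    field_simp at h1
    simpa [hx'] using h1.symm
  have hmain : deriv (deriv (fun x => x ^ (2 * ν + 2) * (Φ x ^ 2 - Φm x * Φp x))) x₀ =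
      (2 / ν) * x₀ ^ (2 * ν + 2) * Φ x₀ ^ 2 := by
    have he : deriv (fun x => x ^ (2 * ν + 2) * (Φ x ^ 2 - Φm x * Φp x)) =ᶠ[nhds x₀]
        (fun x => x ^ (2 * ν + 2) * (x * Φ x * Φp x / (ν * (ν + 1)))) := by
      filter_upwards [lt_mem_nhds hx₀] with x hx using (hF x hx).deriv
    rw [he.deriv_eq]
    have hx' := hx₀.ne'
    have h := (Real.hasDerivAt_rpow_const (x := x₀) (p := 2 * ν + 2) (Or.inl hx')).mul
      ((((hasDerivAt_id x₀).mul (hΦ x₀ hx₀)).mul (hΦp x₀ hx₀)).div_const (ν * (ν + 1)))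
    refine (h.congr_deriv ?_).deriv
    simp only [Pi.mul_apply, id, hp0]
    field_simp
    ring
  refine ⟨hmain, fun hne => ?_⟩
  rw [hmain]
  have := Real.rpow_pos_of_pos hx₀ (2 * ν + 2)
  positivity
end

section
/- Let ν be a real number, let I ⊆ (0,∞) be an open interval, and let c : ℝ → ℝ be twice differentiable on I with c(x) ≠ 0 for all x ∈ I, satisfying x²c''(x) + xc'(x) + (x² − ν²)c(x) = 0 for all x ∈ I. If the Turánian Δ(x) = (1 − ν²/x²)c(x)² + c'(x)² is strictly positive for all x ∈ I, then the function x ↦ x·c'(x)/c(x) is strictly decreasing on I. -/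
/-- On an open interval `I ⊆ (0,∞)` where `c` is a nonvanishing, twice
differentiable solution of the Bessel equation and the Turánian
`Δ(x) = (1 − ν²/x²)c(x)² + c'(x)²` is strictly positive, the function
`x ↦ x·c'(x)/c(x)` is strictly decreasing. -/
theorem logDeriv_strictAnti (ν : ℝ) (I : Set ℝ) (hIopen : IsOpen I)
    (hIint : I.OrdConnected) (hIpos : I ⊆ Set.Ioi 0) (c : ℝ → ℝ)
    (hc1 : ∀ x ∈ I, DifferentiableAt ℝ c x)
    (hc2 : ∀ x ∈ I, DifferentiableAt ℝ (deriv c) x)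
    (hc0 : ∀ x ∈ I, c x ≠ 0)
    (hode : ∀ x ∈ I,
      x ^ 2 * deriv (deriv c) x + x * deriv c x + (x ^ 2 - ν ^ 2) * c x = 0)
    (hturan : ∀ x ∈ I, 0 < (1 - ν ^ 2 / x ^ 2) * c x ^ 2 + (deriv c x) ^ 2) :
    StrictAntiOn (fun x => x * deriv c x / c x) I := by
  have hd : ∀ x ∈ I, HasDerivAt (fun x => x * deriv c x / c x)
      (((1 * deriv c x + x * deriv (deriv c) x) * c x - x * deriv c x * deriv c x) / c x ^ 2) x := by
    intro x hx
    exact ((hasDerivAt_id x).mul (hc2 x hx).hasDerivAt).div (hc1 x hx).hasDerivAt (hc0 x hx)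
  refine strictAntiOn_of_deriv_neg hIint.convex
    (fun x hx => (hd x hx).continuousAt.continuousWithinAt) ?_
  intro x hx
  rw [hIopen.interior_eq] at hx
  rw [(hd x hx).deriv]
  have hx0 : 0 < x := hIpos hx
  have hc : 0 < c x ^ 2 := by have := hc0 x hx; positivity
  have key : x * ((1 * deriv c x + x * deriv (deriv c) x) * c x - x * deriv c x * deriv c x)
      = - (x ^ 2 * ((1 - ν ^ 2 / x ^ 2) * c x ^ 2 + (deriv c x) ^ 2)) := by
    have e : x ^ 2 * ((1 - ν ^ 2 / x ^ 2) * c x ^ 2 + (deriv c x) ^ 2)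
        = (x ^ 2 - ν ^ 2) * c x ^ 2 + x ^ 2 * deriv c x ^ 2 := by
      field_simp
    rw [e]
    linear_combination c x * hode x hx
  have hp : 0 < x ^ 2 * ((1 - ν ^ 2 / x ^ 2) * c x ^ 2 + (deriv c x) ^ 2) :=
    mul_pos (by positivity) (hturan x hx)
  refine div_neg_of_neg_of_pos ?_ hc
  by_contra! h
  have := mul_nonneg hx0.le h
  linarith
end

section
/- Let ν > 0, x₀ > 0, and let a, c, b : ℝ → ℝ with c differentiable at x₀, c(x₀) ≠ 0, satisfying c'(x₀) = a(x₀) − (ν/x₀)c(x₀) and c'(x₀) = −b(x₀) + (ν/x₀)c(x₀). Then (x₀c'(x₀)/c(x₀))² = x₀²·Δ(x₀)/c(x₀)² + ν² − x₀², where Δ(x₀) = c(x₀)² − a(x₀)b(x₀). Consequently, if the Turán inequality Δ(x₀) > c(x₀)²/(ν+1) holds, then (x₀c'(x₀)/c(x₀))² > ν² − (ν/(ν+1))·x₀², while if Δ(x₀) < c(x₀)²/(ν+1) then (x₀c'(x₀)/c(x₀))² < ν² − (ν/(ν+1))·x₀². -/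
/-- If `c` is differentiable at `x₀ > 0` with `c(x₀) ≠ 0` and the recurrences
`c'(x₀) = a(x₀) − (ν/x₀)c(x₀)`, `c'(x₀) = −b(x₀) + (ν/x₀)c(x₀)` hold, then
`(x₀c'(x₀)/c(x₀))² = x₀²Δ(x₀)/c(x₀)² + ν² − x₀²` for the Turánian
`Δ(x₀) = c(x₀)² − a(x₀)b(x₀)`; consequently the Turán inequality
`Δ(x₀) > c(x₀)²/(ν+1)` implies `(x₀c'(x₀)/c(x₀))² > ν² − (ν/(ν+1))x₀²` and the
reversed inequality implies the reversed conclusion. -/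
theorem logDeriv_sq_bound (ν x₀ : ℝ) (hν : 0 < ν) (hx₀ : 0 < x₀) (a c b : ℝ → ℝ)
    (hc : DifferentiableAt ℝ c x₀) (hc0 : c x₀ ≠ 0)
    (h1 : deriv c x₀ = a x₀ - (ν / x₀) * c x₀)
    (h2 : deriv c x₀ = -b x₀ + (ν / x₀) * c x₀) :
    (x₀ * deriv c x₀ / c x₀) ^ 2 =
      x₀ ^ 2 * (c x₀ ^ 2 - a x₀ * b x₀) / c x₀ ^ 2 + ν ^ 2 - x₀ ^ 2 ∧
    (c x₀ ^ 2 / (ν + 1) < c x₀ ^ 2 - a x₀ * b x₀ →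
      ν ^ 2 - (ν / (ν + 1)) * x₀ ^ 2 < (x₀ * deriv c x₀ / c x₀) ^ 2) ∧
    (c x₀ ^ 2 - a x₀ * b x₀ < c x₀ ^ 2 / (ν + 1) →
      (x₀ * deriv c x₀ / c x₀) ^ 2 < ν ^ 2 - (ν / (ν + 1)) * x₀ ^ 2) := by
  have ha : a x₀ = deriv c x₀ + (ν / x₀) * c x₀ := by linarith
  have hb : b x₀ = (ν / x₀) * c x₀ - deriv c x₀ := by linarith
  have hx : x₀ ≠ 0 := hx₀.ne'
  have hn : ν + 1 ≠ 0 := by positivity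
  have key : (x₀ * deriv c x₀ / c x₀) ^ 2 =
      x₀ ^ 2 * (c x₀ ^ 2 - a x₀ * b x₀) / c x₀ ^ 2 + ν ^ 2 - x₀ ^ 2 := by
    rw [ha, hb]
    generalize deriv c x₀ = d
    field_simp
    ring
  have hpos : 0 < x₀ ^ 2 / c x₀ ^ 2 := by positivity
  have e1 : ν ^ 2 - (ν / (ν + 1)) * x₀ ^ 2 =
      x₀ ^ 2 / c x₀ ^ 2 * (c x₀ ^ 2 / (ν + 1)) + ν ^ 2 - x₀ ^ 2 := by
    field_simp
    ring
  have e2 : x₀ ^ 2 * (c x₀ ^ 2 - a x₀ * b x₀) / c x₀ ^ 2 =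
      x₀ ^ 2 / c x₀ ^ 2 * (c x₀ ^ 2 - a x₀ * b x₀) := by ring
  refine ⟨key, fun h => ?_, fun h => ?_⟩
  · rw [key, e1, e2]
    have := mul_lt_mul_of_pos_left h hpos
    linarith
  · rw [key, e1, e2]
    have := mul_lt_mul_of_pos_left h hpos
    linarith
end
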